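/- Let X_1, ..., X_m ∈ ℝ^d be vectors, λ > 0, and G = Σ_{ℓ=1}^m X_ℓ X_ℓᵀ + λ I_d, with smallest eigenvalue λ_min(G) ≥ λ > 0. Then for every x ∈ ℝ^d, Σ_{ℓ=1}^m (xᵀ G⁻¹ X_ℓ)² ≥ (1 − λ / λ_min(G)) · xᵀ G⁻¹ x. -/

import Mathlib

open Matrix BigOperators

lemma rayleigh_aux {d : ℕ} (G : Matrix (Fin d) (Fin d) ℝ) (h : G.IsHermitian) (lmin : ℝ)
    (hlb : ∀ i : Fin d, lmin ≤ h.eigenvalues i) (y : Fin d → ℝ) :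
    lmin * (y ⬝ᵥ y) ≤ y ⬝ᵥ G.mulVec y := by
  have hU : (h.eigenvectorUnitary : Matrix (Fin d) (Fin d) ℝ) *
      (h.eigenvectorUnitary : Matrix (Fin d) (Fin d) ℝ)ᴴ = 1 :=
    Unitary.coe_mul_star_self h.eigenvectorUnitary
  have hs := h.spectral_theorem
  rw [Unitary.conjStarAlgAut_apply] at hs
  have hp : (G - lmin • (1 : Matrix (Fin d) (Fin d) ℝ)).PosSemidef := by
    have hD : (diagonal (fun i => h.eigenvalues i - lmin)).PosSemidef :=
      PosSemidef.diagonal (fun i => sub_nonneg.2 (hlb i))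
    have h2 := hD.mul_mul_conjTranspose_same (h.eigenvectorUnitary : Matrix (Fin d) (Fin d) ℝ)
    convert h2 using 1
    have e : diagonal (fun i => h.eigenvalues i - lmin)
        = diagonal (RCLike.ofReal ∘ h.eigenvalues) - lmin • (1 : Matrix (Fin d) (Fin d) ℝ) := by
      rw [smul_one_eq_diagonal, diagonal_sub]
      rfl
    rw [e, mul_sub, sub_mul]
    congr 1
    rw [mul_smul_comm, smul_mul_assoc, mul_one, hU]
  have := hp.dotProduct_mulVec_nonneg y
  simp only [star_trivial, sub_mulVec, smul_mulVec, one_mulVec, dotProduct_sub,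
    dotProduct_smul, smul_eq_mul] at this
  linarith



/-- Let `X_1, ..., X_m ∈ ℝ^d`, `λ > 0`, and `G = Σ_ℓ X_ℓ X_ℓᵀ + λ I_d`, with smallest
eigenvalue `λ_min(G) ≥ λ > 0`. Then for every `x ∈ ℝ^d`,
`Σ_ℓ (xᵀ G⁻¹ X_ℓ)² ≥ (1 − λ/λ_min(G)) · xᵀ G⁻¹ x`. -/
theorem stmt_4 {d m : ℕ} (X : Fin m → Fin d → ℝ) (lam : ℝ) (hlam : 0 < lam)
    (G : Matrix (Fin d) (Fin d) ℝ)
    (hG : G = (∑ ℓ : Fin m, Matrix.vecMulVec (X ℓ) (X ℓ)) + lam • (1 : Matrix (Fin d) (Fin d) ℝ))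
    (hGherm : G.IsHermitian) (lmin : ℝ)
    (hlb : ∀ i : Fin d, lmin ≤ hGherm.eigenvalues i)
    (hmem : ∃ i : Fin d, hGherm.eigenvalues i = lmin)
    (hmin : lam ≤ lmin)
    (x : Fin d → ℝ) :
    (1 - lam / lmin) * (x ⬝ᵥ G⁻¹.mulVec x)
      ≤ ∑ ℓ : Fin m, (x ⬝ᵥ G⁻¹.mulVec (X ℓ)) ^ 2 := by
  have hl : 0 < lmin := lt_of_lt_of_le hlam hmin
  have hpd : G.PosDef := hGherm.posDef_iff_eigenvalues_pos.2 fun i => hl.trans_le (hlb i)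
  have hdet : IsUnit G.det := (Matrix.isUnit_iff_isUnit_det G).1 hpd.isUnit
  have hT : G⁻¹ᵀ = G⁻¹ := by
    have := hGherm.inv
    rwa [Matrix.IsHermitian, conjTranspose_eq_transpose_of_trivial] at this
  obtain ⟨y, hy⟩ : ∃ y, y = G⁻¹.mulVec x := ⟨_, rfl⟩
  have hv : ∀ z, x ⬝ᵥ G⁻¹.mulVec z = y ⬝ᵥ z := by
    intro z
    rw [dotProduct_mulVec, ← mulVec_transpose, hT, hy]
  have hx : x = G.mulVec y := by
    rw [hy, mulVec_mulVec, mul_nonsing_inv _ hdet, one_mulVec]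
  have hr := rayleigh_aux G hGherm lmin hlb y
  have hq : y ⬝ᵥ G.mulVec y = (∑ ℓ, (y ⬝ᵥ X ℓ) ^ 2) + lam * (y ⬝ᵥ y) := by
    rw [hG]
    simp only [add_mulVec, sum_mulVec, smul_mulVec, one_mulVec, dotProduct_add, dotProduct_sum,
      dotProduct_smul, smul_eq_mul, vecMulVec_mulVec]
    congr 1
    refine Finset.sum_congr rfl fun l _ => ?_
    simp [dotProduct_comm (X l) y, sq]
  simp only [hv]
  have hx' : y ⬝ᵥ x = y ⬝ᵥ G.mulVec y := by rw [← hx]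
  rw [hx']
  have h3 : lam * (y ⬝ᵥ y) ≤ lam / lmin * (y ⬝ᵥ G.mulVec y) := by
    calc lam * (y ⬝ᵥ y) = lam / lmin * (lmin * (y ⬝ᵥ y)) := by field_simp
      _ ≤ _ := mul_le_mul_of_nonneg_left hr (by positivity)
  linarith
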